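/- arXiv:2112.11393 — 2 statements merged into one kernel-verified Lean document; each statement's English description precedes it below -/
import Mathlib

section
/- Let F be a field, α_1,…,α_n distinct nonzero elements of F, t a natural number, and A ⊆ {1,…,n} with |A| ≥ t + 1. Suppose (f_i)_{i∈A} are polynomials over F of degree at most t satisfying f_i(α_j) = f_j(α_i) for all i, j ∈ A. Then there exists a unique bivariate polynomial F*(x,y) over F of degree at most (t,t) such that F*(x, α_i) = f_i(x) and F*(α_i, y) = f_i(y) for every i ∈ A, and moreover this F* is symmetric, i.e., F*(x,y) = F*(y,x). -/
open Polynomial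

/-!
Interpolate the `f i` over `t + 1` of the nodes, as columns of a polynomial of degree at most
`(t, t)`. A polynomial of that degree is determined by its values on the grid of pairs of these
nodes, and consistency says that these values are symmetric; so the interpolant equals its own
swap, and its rows are its columns. The column at any further node `α j` takes the values
`(f i).eval (α j) = (f j).eval (α i)` at the chosen nodes `α i`, hence equals `f j`.
-/

open scoped Polynomial.Bivariate

section CommSemiring

variable {R : Type*} [CommSemiring R]

theorem coeff_coeff_swap (P : R[X][Y]) (a b : ℕ) :
    ((Bivariate.swap P).coeff a).coeff b = (P.coeff b).coeff a := by
  induction P using Polynomial.induction_on' with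
  | add P Q hP hQ => simp only [map_add, coeff_add, hP, hQ]
  | monomial n p =>
    rw [Bivariate.swap_monomial, coeff_mul_C, coeff_map, coeff_C_mul_X_pow]
    obtain rfl | hbn := eq_or_ne b n
    · rw [if_pos rfl, coeff_monomial_same]
    · rw [if_neg hbn, coeff_monomial_of_ne p hbn, coeff_zero]

theorem eval_C_eq_map_swap (P : R[X][Y]) (c : R) :
    P.eval (C c) = (Bivariate.swap P).map (evalRingHom c) := by
  simpa [aeval_def, eval₂_eq_eval_map, mapRingHom_id] using Bivariate.aveal_eq_map_swap c P

theorem map_evalRingHom_map_C (p : R[X]) (c : R) : (p.map C).map (evalRingHom c) = p := by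
  have evalRingHom_comp_C : (evalRingHom c).comp C = RingHom.id R := RingHom.ext fun _ => eval_C
  rw [Polynomial.map_map, evalRingHom_comp_C, Polynomial.map_id]

/-- `BidegreeLE P l m` says that the bivariate polynomial `P(x, y)` has degree at most `(l, m)`.
As `Y` is the outer variable of `R[X][Y]`, the bound `l` on the degree in `x` is imposed on the
coefficients of `P`. -/
def BidegreeLE (P : R[X][Y]) (l m : ℕ) : Prop :=
  (∀ k, (P.coeff k).natDegree ≤ l) ∧ P.natDegree ≤ m

theorem BidegreeLE.swap {P : R[X][Y]} {l m : ℕ} (hP : BidegreeLE P l m) :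
    BidegreeLE (Bivariate.swap P) m l := by
  constructor
  · intro k
    refine natDegree_le_iff_coeff_eq_zero.mpr fun j hj => ?_
    rw [coeff_coeff_swap, coeff_eq_zero_of_natDegree_lt (hP.2.trans_lt hj), coeff_zero]
  · refine natDegree_le_iff_coeff_eq_zero.mpr fun j hj => ?_
    ext k
    rw [coeff_coeff_swap, coeff_eq_zero_of_natDegree_lt ((hP.1 k).trans_lt hj), coeff_zero]

end CommSemiring

section IsDomain

variable {R ι κ : Type*} [CommRing R] [IsDomain R] {s : Finset ι} {r : Finset κ}
  {u : ι → R} {v : κ → R} {l m : ℕ}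

theorem eq_of_natDegree_le_of_eval_index_eq {p q : R[X]} (hu : Set.InjOn u s) (hl : l < s.card)
    (hp : p.natDegree ≤ l) (hq : q.natDegree ≤ l) (h : ∀ i ∈ s, p.eval (u i) = q.eval (u i)) :
    p = q :=
  have degree_lt {g : R[X]} (hg : g.natDegree ≤ l) : g.degree < s.card :=
    (degree_le_of_natDegree_le hg).trans_lt (Nat.cast_lt.mpr hl)
  eq_of_degrees_lt_of_eval_index_eq s hu (degree_lt hp) (degree_lt hq) h

theorem eq_of_natDegree_coeff_le_of_map_evalRingHom_eq {P Q : R[X][Y]} (hu : Set.InjOn u s)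
    (hl : l < s.card) (hP : ∀ k, (P.coeff k).natDegree ≤ l) (hQ : ∀ k, (Q.coeff k).natDegree ≤ l)
    (h : ∀ i ∈ s, P.map (evalRingHom (u i)) = Q.map (evalRingHom (u i))) : P = Q := by
  ext1 k
  refine eq_of_natDegree_le_of_eval_index_eq hu hl (hP k) (hQ k) fun i hi => ?_
  simpa only [coeff_map, coe_evalRingHom] using congrArg (coeff · k) (h i hi)

theorem BidegreeLE.eq_of_evalEval_eq {P Q : R[X][Y]} (hP : BidegreeLE P l m)
    (hQ : BidegreeLE Q l m) (hu : Set.InjOn u s) (hv : Set.InjOn v r) (hl : l < s.card)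
    (hm : m < r.card) (h : ∀ i ∈ s, ∀ j ∈ r, P.evalEval (u i) (v j) = Q.evalEval (u i) (v j)) :
    P = Q := by
  refine eq_of_natDegree_coeff_le_of_map_evalRingHom_eq hu hl hP.1 hQ.1 fun i hi => ?_
  refine eq_of_natDegree_le_of_eval_index_eq hv hm (natDegree_map_le.trans hP.2)
    (natDegree_map_le.trans hQ.2) fun j hj => ?_
  simpa only [map_evalRingHom_eval] using h i hi j hj

theorem map_evalRingHom_eq_of_swap_eq {P : R[X][Y]} {f : ι → R[X]} {g : R[X]} {c : R}
    (hu : Set.InjOn u s) (hm : m < s.card) (hP : P.natDegree ≤ m) (hg : g.natDegree ≤ m)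
    (hswap : Bivariate.swap P = P) (hcol : ∀ i ∈ s, P.map (evalRingHom (u i)) = f i)
    (hfg : ∀ i ∈ s, (f i).eval c = g.eval (u i)) : P.map (evalRingHom c) = g := by
  refine eq_of_natDegree_le_of_eval_index_eq hu hm (natDegree_map_le.trans hP) hg fun i hi => ?_
  rw [map_evalRingHom_eval, evalEval, eval_C_eq_map_swap, hswap, hcol i hi, hfg i hi]

end IsDomain

section Field

variable {F ι : Type*} [Field F] [DecidableEq ι] {s : Finset ι} {v : ι → F} {f : ι → F[X]}
  {t : ℕ}

/-- The Lagrange interpolant in `x` of the polynomials `f i`, read as polynomials in `y`: the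
bivariate polynomial `∑ i ∈ s, Lᵢ(x) f i(y)`, whose column at the node `v i` is `f i`. -/
noncomputable def columnInterpolate (s : Finset ι) (v : ι → F) (f : ι → F[X]) : F[X][Y] :=
  ∑ i ∈ s, C (Lagrange.basis s v i) * (f i).map C

theorem map_evalRingHom_columnInterpolate (hv : Set.InjOn v s) {j : ι} (hj : j ∈ s) :
    (columnInterpolate s v f).map (evalRingHom (v j)) = f j := by
  have map_term (i : ι) : (C (Lagrange.basis s v i) * (f i).map C).map (evalRingHom (v j)) =
      C ((Lagrange.basis s v i).eval (v j)) * f i := by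
    rw [Polynomial.map_mul, map_C, map_evalRingHom_map_C, coe_evalRingHom]
  simp only [columnInterpolate, Polynomial.map_sum, map_term]
  rw [Finset.sum_eq_single_of_mem j hj]
  · rw [Lagrange.eval_basis_self hv hj, C_1, one_mul]
  · intro i _ hij
    rw [Lagrange.eval_basis_of_ne hij hj, C_0, zero_mul]

theorem bidegreeLE_columnInterpolate {l m : ℕ} (hv : Set.InjOn v s) (hs : s.card ≤ l + 1)
    (hf : ∀ i ∈ s, (f i).natDegree ≤ m) : BidegreeLE (columnInterpolate s v f) l m := by
  constructor
  · intro k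
    rw [columnInterpolate, finsetSum_coeff]
    refine natDegree_sum_le_of_forall_le _ _ fun i hi => ?_
    rw [coeff_C_mul, coeff_map]
    refine (natDegree_mul_C_le _ _).trans ?_
    rw [Lagrange.natDegree_basis hv hi]
    lia
  · exact natDegree_sum_le_of_forall_le _ _ fun i hi =>
      (natDegree_C_mul_le _ _).trans (natDegree_map_le.trans (hf i hi))

theorem swap_columnInterpolate (hv : Set.InjOn v s) (hs : s.card = t + 1)
    (hf : ∀ i ∈ s, (f i).natDegree ≤ t)
    (hcons : ∀ i ∈ s, ∀ j ∈ s, (f i).eval (v j) = (f j).eval (v i)) :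
    Bivariate.swap (columnInterpolate s v f) = columnInterpolate s v f := by
  have hdeg : BidegreeLE (columnInterpolate s v f) t t := bidegreeLE_columnInterpolate hv hs.le hf
  have ht : t < s.card := hs ▸ t.lt_succ_self
  refine hdeg.swap.eq_of_evalEval_eq hdeg hv hv ht ht fun i hi j hj => ?_
  calc (Bivariate.swap (columnInterpolate s v f)).evalEval (v i) (v j)
      = ((columnInterpolate s v f).map (evalRingHom (v j))).eval (v i) := by
        rw [evalEval, eval_C_eq_map_swap, Bivariate.swap_swap_apply]
    _ = (f j).eval (v i) := by rw [map_evalRingHom_columnInterpolate hv hj]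
    _ = (f i).eval (v j) := hcons j hj i hi
    _ = (columnInterpolate s v f).evalEval (v i) (v j) := by
        rw [← map_evalRingHom_eval, map_evalRingHom_columnInterpolate hv hi]

end Field

theorem stmt_3_general {F ι : Type*} [Field F] {t : ℕ} {α : ι → F} {A : Finset ι}
    (hα : Set.InjOn α A) (hA : t + 1 ≤ A.card) {f : ι → F[X]}
    (hf : ∀ i ∈ A, (f i).natDegree ≤ t)
    (hcons : ∀ i ∈ A, ∀ j ∈ A, (f i).eval (α j) = (f j).eval (α i)) :
    ∃ P : F[X][Y],
      (BidegreeLE P t t ∧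
        (∀ i ∈ A, P.eval (C (α i)) = f i) ∧
        (∀ i ∈ A, P.map (evalRingHom (α i)) = f i) ∧
        (∀ a b, (P.coeff a).coeff b = (P.coeff b).coeff a)) ∧
      ∀ Q : F[X][Y], (∀ k, (Q.coeff k).natDegree ≤ t) →
        (∀ i ∈ A, Q.map (evalRingHom (α i)) = f i) → Q = P := by
  classical
  obtain ⟨B, hBA, hB⟩ := Finset.exists_subset_card_eq hA
  have hαB : Set.InjOn α B := hα.mono (Finset.coe_subset.mpr hBA)
  have hfB : ∀ i ∈ B, (f i).natDegree ≤ t := fun i hi => hf i (hBA hi)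
  set P := columnInterpolate B α f
  have hdeg : BidegreeLE P t t := bidegreeLE_columnInterpolate hαB hB.le hfB
  have hswap : Bivariate.swap P = P :=
    swap_columnInterpolate hαB hB hfB fun i hi j hj => hcons i (hBA hi) j (hBA hj)
  have hcol : ∀ j ∈ A, P.map (evalRingHom (α j)) = f j := fun j hj =>
    map_evalRingHom_eq_of_swap_eq hαB (hB ▸ t.lt_succ_self) hdeg.2 (hf j hj) hswap
      (fun i hi => map_evalRingHom_columnInterpolate hαB hi) fun i hi => hcons i (hBA hi) j hj
  refine ⟨P, ⟨hdeg, fun i hi => ?_, hcol, fun a b => ?_⟩, fun Q hQ hQcol => ?_⟩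
  · rw [eval_C_eq_map_swap, hswap, hcol i hi]
  · rw [← coeff_coeff_swap, hswap]
  · exact eq_of_natDegree_coeff_le_of_map_evalRingHom_eq hα hA hQ hdeg.1 fun i hi =>
      (hQcol i hi).trans (hcol i hi).symm

/-- Symmetric pairwise-consistency lemma: if the degree-`≤ t` polynomials `f i`, `i ∈ A`
with `|A| ≥ t + 1`, satisfy `f i (α j) = f j (α i)`, then there is a unique bivariate
polynomial of degree at most `(t,t)` having each `f i` as both its `i`-th row and `i`-th
column polynomial, and moreover this polynomial is symmetric.
A bivariate polynomial `F(x,y)` is represented as `P : Polynomial (Polynomial F)`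
(polynomial in `y` with coefficients polynomials in `x`): `F(x, α) = P.eval (C α)`,
`F(α, y) = P.map (evalRingHom α)`, and symmetry means the coefficient of `x^a y^b` equals
that of `x^b y^a` for all `a, b`. -/
theorem stmt_3 (F : Type*) [Field F] (n t : ℕ)
    (α : Fin n → F) (hα : Function.Injective α) (hα0 : ∀ i, α i ≠ 0)
    (A : Finset (Fin n)) (hA : t + 1 ≤ A.card)
    (f : Fin n → F[X]) (hf : ∀ i ∈ A, (f i).natDegree ≤ t)
    (hcons : ∀ i ∈ A, ∀ j ∈ A, (f i).eval (α j) = (f j).eval (α i)) :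
    ∃ P : Polynomial (Polynomial F),
      (((∀ k, (P.coeff k).natDegree ≤ t) ∧ P.natDegree ≤ t) ∧
        (∀ i ∈ A, P.eval (Polynomial.C (α i)) = f i) ∧
        (∀ i ∈ A, P.map (evalRingHom (α i)) = f i) ∧
        (∀ a b, (P.coeff a).coeff b = (P.coeff b).coeff a)) ∧
      ∀ Q : Polynomial (Polynomial F),
        ((∀ k, (Q.coeff k).natDegree ≤ t) ∧ Q.natDegree ≤ t) →
        (∀ i ∈ A, Q.eval (Polynomial.C (α i)) = f i) →
        (∀ i ∈ A, Q.map (evalRingHom (α i)) = f i) →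
        Q = P := by
  obtain ⟨P, hP, huniq⟩ := stmt_3_general hα.injOn hA hf hcons
  exact ⟨P, hP, fun Q hQ _ hQcol => huniq Q hQ.1 hQcol⟩
end

section
/- Let F be a field, α_1,…,α_n distinct nonzero elements of F, t < n, and C ⊆ {1,…,n} with |C| ≤ t. Let (u_i)_{i∈C} and (v_i)_{i∈C} be polynomials over F of degree at most t satisfying the pairwise-consistency conditions u_i(α_j) = v_j(α_i) for all i, j ∈ C, and let q be any polynomial over F of degree at most t with q(α_i) = u_i(0) for all i ∈ C. Then there exists a bivariate polynomial F(x,y) over F of degree at most (t,t) such that F(0,y) = q(y), F(x,α_i) = u_i(x) for all i ∈ C, and F(α_i,y) = v_i(y) for all i ∈ C. -/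
open Polynomial

/-!
The idea is Gordon's Boolean sum of interpolation operators. Treat `0` as one more column node,
with column `q`. Interpolating in `x` yields `∑ o, L o (x) * w o (y)`, which has the prescribed
columns `w o`; interpolating in `y` the difference between the prescribed rows and the rows of this
polynomial then corrects the rows. By consistency that difference vanishes at every column node, so
the correction leaves the columns unchanged.
-/

section Bidegree

/-- The bivariate polynomials of degree at most `(ℓ, m)`. The outer variable of `R[X][X]` is `y`
and the inner one is `x`, so `ℓ` bounds the degree of every coefficient. -/
def bidegreeLE (R : Type*) [Semiring R] (ℓ m : ℕ) : Submodule R R[X][X] where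
  carrier := {P | (∀ k, (P.coeff k).natDegree ≤ ℓ) ∧ P.natDegree ≤ m}
  zero_mem' := by simp
  add_mem' {P Q} hP hQ :=
    ⟨fun k ↦ by rw [coeff_add]; exact natDegree_add_le_of_degree_le (hP.1 k) (hQ.1 k),
      natDegree_add_le_of_degree_le hP.2 hQ.2⟩
  smul_mem' c P hP :=
    ⟨fun k ↦ by rw [coeff_smul]; exact (natDegree_smul_le c _).trans (hP.1 k),
      (natDegree_smul_le c P).trans hP.2⟩

variable {R : Type*}

/-- The bivariate polynomial `f(x) g(y)`, with `y` the outer variable. -/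
noncomputable def outerProduct [Semiring R] (f g : R[X]) : R[X][X] :=
  C f * g.map C

lemma outerProduct_mem_bidegreeLE [Semiring R] {f g : R[X]} {ℓ m : ℕ}
    (hf : f.natDegree ≤ ℓ) (hg : g.natDegree ≤ m) : outerProduct f g ∈ bidegreeLE R ℓ m := by
  refine ⟨fun k ↦ ?_, (natDegree_C_mul_le _ _).trans (natDegree_map_le.trans hg)⟩
  rw [outerProduct, coeff_C_mul, coeff_map]
  exact (natDegree_mul_C_le _ _).trans hf

variable [CommSemiring R]

lemma eval_C_outerProduct (f g : R[X]) (y : R) :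
    (outerProduct f g).eval (C y) = g.eval y • f := by
  rw [outerProduct, eval_mul, eval_C, eval_map, eval₂_at_apply, smul_eq_C_mul, mul_comm]

lemma map_evalRingHom_outerProduct (f g : R[X]) (x : R) :
    (outerProduct f g).map (evalRingHom x) = f.eval x • g := by
  have evalRingHom_comp_C : (evalRingHom x).comp C = RingHom.id R := by ext; simp
  rw [outerProduct, Polynomial.map_mul, map_C, map_map, evalRingHom_comp_C, map_id,
    coe_evalRingHom, smul_eq_C_mul]

end Bidegree

section Interpolant

variable {F ι : Type*} [Field F] [DecidableEq ι] {s : Finset ι} {a : ι → F} {ℓ m : ℕ}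

lemma natDegree_lagrangeBasis_le (ha : Set.InjOn a s) (hs : s.card ≤ m + 1) {i : ι} (hi : i ∈ s) :
    (Lagrange.basis s a i).natDegree ≤ m :=
  (Lagrange.natDegree_basis ha hi).trans_le (by lia)

lemma natDegree_interpolate_le (ha : Set.InjOn a s) (hs : s.card ≤ m + 1) (c : ι → F) :
    (Lagrange.interpolate s a c).natDegree ≤ m :=
  (natDegree_le_of_degree_le (Lagrange.degree_interpolate_le c ha)).trans (by lia)

lemma sum_eval_lagrangeBasis_smul {M : Type*} [AddCommMonoid M] [Module F M]
    (ha : Set.InjOn a s) (w : ι → M) {j : ι} (hj : j ∈ s) :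
    ∑ i ∈ s, (Lagrange.basis s a i).eval (a j) • w i = w j := by
  rw [Finset.sum_eq_single_of_mem j hj, Lagrange.eval_basis_self ha hj, one_smul]
  intro i _ hij
  rw [Lagrange.eval_basis_of_ne hij hj, zero_smul]

lemma interpolate_eq_sum_smul (c : ι → F) :
    Lagrange.interpolate s a c = ∑ i ∈ s, c i • Lagrange.basis s a i := by
  simp only [Lagrange.interpolate_apply, smul_eq_C_mul]

/-- Lagrange interpolation in `y`: the rows at the nodes `a i` are the polynomials `u i`. -/
noncomputable def rowInterpolant (s : Finset ι) (a : ι → F) (u : ι → F[X]) : F[X][X] :=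
  ∑ i ∈ s, outerProduct (u i) (Lagrange.basis s a i)

/-- Lagrange interpolation in `x`: the columns at the nodes `a i` are the polynomials `w i`. -/
noncomputable def columnInterpolant (s : Finset ι) (a : ι → F) (w : ι → F[X]) : F[X][X] :=
  ∑ i ∈ s, outerProduct (Lagrange.basis s a i) (w i)

lemma rowInterpolant_mem_bidegreeLE (ha : Set.InjOn a s) (hs : s.card ≤ m + 1) {u : ι → F[X]}
    (hu : ∀ i ∈ s, (u i).natDegree ≤ ℓ) : rowInterpolant s a u ∈ bidegreeLE F ℓ m :=
  sum_mem fun i hi ↦ outerProduct_mem_bidegreeLE (hu i hi) (natDegree_lagrangeBasis_le ha hs hi)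

lemma columnInterpolant_mem_bidegreeLE (ha : Set.InjOn a s) (hs : s.card ≤ ℓ + 1) {w : ι → F[X]}
    (hw : ∀ i ∈ s, (w i).natDegree ≤ m) : columnInterpolant s a w ∈ bidegreeLE F ℓ m :=
  sum_mem fun i hi ↦ outerProduct_mem_bidegreeLE (natDegree_lagrangeBasis_le ha hs hi) (hw i hi)

lemma eval_C_rowInterpolant (ha : Set.InjOn a s) (u : ι → F[X]) {j : ι} (hj : j ∈ s) :
    (rowInterpolant s a u).eval (C (a j)) = u j := by
  simp only [rowInterpolant, eval_finsetSum, eval_C_outerProduct]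
  exact sum_eval_lagrangeBasis_smul ha u hj

lemma map_evalRingHom_columnInterpolant (ha : Set.InjOn a s) (w : ι → F[X]) {j : ι} (hj : j ∈ s) :
    (columnInterpolant s a w).map (evalRingHom (a j)) = w j := by
  simp only [columnInterpolant, Polynomial.map_sum, map_evalRingHom_outerProduct]
  exact sum_eval_lagrangeBasis_smul ha w hj

lemma map_evalRingHom_rowInterpolant (u : ι → F[X]) (x : F) :
    (rowInterpolant s a u).map (evalRingHom x) =
      Lagrange.interpolate s a fun i ↦ (u i).eval x := by
  simp only [rowInterpolant, Polynomial.map_sum, map_evalRingHom_outerProduct,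
    interpolate_eq_sum_smul]

lemma eval_C_columnInterpolant (w : ι → F[X]) (y : F) :
    (columnInterpolant s a w).eval (C y) = Lagrange.interpolate s a fun i ↦ (w i).eval y := by
  simp only [columnInterpolant, eval_finsetSum, eval_C_outerProduct, interpolate_eq_sum_smul]

end Interpolant

theorem exists_mem_bidegreeLE_eval_eq_and_map_eq {F ι κ : Type*} [Field F] {ℓ m : ℕ}
    {s : Finset ι} {a : ι → F} (ha : Set.InjOn a s) (hs : s.card ≤ m + 1)
    {r : Finset κ} {b : κ → F} (hb : Set.InjOn b r) (hr : r.card ≤ ℓ + 1)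
    {u : ι → F[X]} {w : κ → F[X]}
    (hu : ∀ i ∈ s, (u i).natDegree ≤ ℓ) (hw : ∀ o ∈ r, (w o).natDegree ≤ m)
    (huw : ∀ i ∈ s, ∀ o ∈ r, (u i).eval (b o) = (w o).eval (a i)) :
    ∃ P ∈ bidegreeLE F ℓ m, (∀ i ∈ s, P.eval (C (a i)) = u i) ∧
      ∀ o ∈ r, P.map (evalRingHom (b o)) = w o := by
  classical
  let rowError (i : ι) : F[X] := u i - Lagrange.interpolate r b fun o ↦ (w o).eval (a i)
  have natDegree_rowError : ∀ i ∈ s, (rowError i).natDegree ≤ ℓ := fun i hi ↦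
    (natDegree_sub_le _ _).trans (max_le (hu i hi) (natDegree_interpolate_le hb hr _))
  have eval_rowError : ∀ i ∈ s, ∀ o ∈ r, (rowError i).eval (b o) = 0 := fun i hi o ho ↦ by
    rw [eval_sub, Lagrange.eval_interpolate_at_node _ hb ho, huw i hi o ho, sub_self]
  refine ⟨columnInterpolant r b w + rowInterpolant s a rowError,
    add_mem (columnInterpolant_mem_bidegreeLE hb hr hw)
      (rowInterpolant_mem_bidegreeLE ha hs natDegree_rowError), fun i hi ↦ ?_, fun o ho ↦ ?_⟩
  · rw [eval_add, eval_C_columnInterpolant, eval_C_rowInterpolant ha _ hi, add_sub_cancel]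
  · have row_correction_vanishes : (rowInterpolant s a rowError).map (evalRingHom (b o)) = 0 := by
      rw [map_evalRingHom_rowInterpolant,
        Lagrange.interpolate_eq_of_values_eq_on _ 0 fun i hi ↦ eval_rowError i hi o ho, map_zero]
    rw [Polynomial.map_add, map_evalRingHom_columnInterpolant hb w ho, row_correction_vanishes,
      add_zero]

lemma injOn_optionElim_insertNone {ι β : Type*} {s : Finset ι} {f : ι → β} {b : β}
    (hf : Set.InjOn f s) (hb : ∀ i ∈ s, f i ≠ b) :
    Set.InjOn (fun o : Option ι ↦ o.elim b f) s.insertNone := by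
  rintro (_ | i) hi (_ | j) hj hij
  · rfl
  · exact absurd hij.symm (hb j (Finset.some_mem_insertNone.mp hj))
  · exact absurd hij (hb i (Finset.some_mem_insertNone.mp hi))
  · exact congrArg some
      (hf (Finset.some_mem_insertNone.mp hi) (Finset.some_mem_insertNone.mp hj) hij)

theorem stmt_5_general {F ι : Type*} [Field F] {ℓ m : ℕ} {α : ι → F} {Cs : Finset ι}
    (hα : Set.InjOn α Cs) (hα0 : ∀ i ∈ Cs, α i ≠ 0) (hℓ : Cs.card ≤ ℓ) (hm : Cs.card ≤ m + 1)
    {u v : ι → F[X]} (hu : ∀ i ∈ Cs, (u i).natDegree ≤ ℓ) (hv : ∀ i ∈ Cs, (v i).natDegree ≤ m)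
    (hcons : ∀ i ∈ Cs, ∀ j ∈ Cs, (u i).eval (α j) = (v j).eval (α i))
    {q : F[X]} (hq : q.natDegree ≤ m) (hqv : ∀ i ∈ Cs, q.eval (α i) = (u i).eval 0) :
    ∃ P ∈ bidegreeLE F ℓ m, P.map (evalRingHom 0) = q ∧
      (∀ i ∈ Cs, P.eval (C (α i)) = u i) ∧ ∀ i ∈ Cs, P.map (evalRingHom (α i)) = v i := by
  obtain ⟨P, hP, rows, columns⟩ := exists_mem_bidegreeLE_eval_eq_and_map_eq hα hm
    (injOn_optionElim_insertNone hα hα0) (by simpa using hℓ) (w := fun o ↦ o.elim q v) hu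
    (Finset.forall_mem_insertNone.mpr ⟨hq, hv⟩)
    fun i hi ↦ Finset.forall_mem_insertNone.mpr ⟨(hqv i hi).symm, hcons i hi⟩
  obtain ⟨column_zero, column_node⟩ := Finset.forall_mem_insertNone.mp columns
  exact ⟨P, hP, column_zero, rows, column_node⟩

/-- Extension lemma: pairwise-consistent row polynomials `u i` and column polynomials
`v i` (degree ≤ t) for a set `Cs` of at most `t` indices, together with any degree-`≤ t`
polynomial `q` with `q (α i) = u i (0)`, extend to a bivariate polynomial of degree at
most `(t,t)` with `F(0,y) = q`, rows `u i` and columns `v i`.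
A bivariate polynomial `F(x,y)` is represented as `P : Polynomial (Polynomial F)`
(polynomial in `y` with coefficients polynomials in `x`): `F(x, α) = P.eval (C α)`,
`F(α, y) = P.map (evalRingHom α)`, and `F(0, y) = P.map (evalRingHom 0)`. -/
theorem stmt_5 (F : Type*) [Field F] (n t : ℕ) (htn : t < n)
    (α : Fin n → F) (hα : Function.Injective α) (hα0 : ∀ i, α i ≠ 0)
    (Cs : Finset (Fin n)) (hCs : Cs.card ≤ t)
    (u v : Fin n → F[X])
    (hu : ∀ i ∈ Cs, (u i).natDegree ≤ t) (hv : ∀ i ∈ Cs, (v i).natDegree ≤ t)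
    (hcons : ∀ i ∈ Cs, ∀ j ∈ Cs, (u i).eval (α j) = (v j).eval (α i))
    (q : F[X]) (hq : q.natDegree ≤ t) (hqv : ∀ i ∈ Cs, q.eval (α i) = (u i).eval 0) :
    ∃ P : Polynomial (Polynomial F),
      ((∀ k, (P.coeff k).natDegree ≤ t) ∧ P.natDegree ≤ t) ∧
      P.map (evalRingHom 0) = q ∧
      (∀ i ∈ Cs, P.eval (Polynomial.C (α i)) = u i) ∧
      (∀ i ∈ Cs, P.map (evalRingHom (α i)) = v i) :=
  stmt_5_general hα.injOn (fun i _ ↦ hα0 i) hCs (Nat.le_succ_of_le hCs) hu hv hcons hq hqv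
end
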